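/- Assume that the Hardy–Littlewood prime pair conjecture holds uniformly for 2 ≤ d ≤ (log x)²; i.e., for every ε > 0 there exists x₀ such that for all x ≥ x₀ and all even integers d with 2 ≤ d ≤ (log x)² one has |π₂(x,d) − 𝔖(d)·x/(log x)²| ≤ ε·𝔖(d)·x/(log x)². Then the jumping champions tend to infinity: for every M > 0 there exists X such that for all x ≥ X, every jumping champion d* for x satisfies d* > M. -/

import Mathlib

open Filter Real

/-- The `n`-th prime, 1-indexed: `nthPrime 1 = 2`, `nthPrime 2 = 3`, ... -/
noncomputable def nthPrime (n : ℕ) : ℕ := Nat.nth Nat.Prime (n - 1)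

/-- `N x d` is the number of indices `n ≥ 2` with `pₙ ≤ x` and `pₙ - pₙ₋₁ = d`. -/
noncomputable def N (x : ℝ) (d : ℕ) : ℕ :=
  Set.ncard {n : ℕ | 2 ≤ n ∧ (nthPrime n : ℝ) ≤ x ∧ nthPrime n - nthPrime (n - 1) = d}

/-- `N* x`, the maximal number of occurrences of any gap among consecutive primes up to `x`. -/
noncomputable def Nstar (x : ℝ) : ℕ := sSup (Set.range fun d => N x d)

/-- A positive integer `d` is a jumping champion for `x` if `N x d` attains `max_d N x d`. -/
def JumpingChampion (x : ℝ) (d : ℕ) : Prop := 0 < d ∧ ∀ e : ℕ, N x e ≤ N x d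

/-- `pi2 x d` counts primes `q ≤ x` such that `q - d` is also prime. -/
noncomputable def pi2 (x : ℝ) (d : ℕ) : ℕ :=
  Set.ncard {q : ℕ | q.Prime ∧ (q : ℝ) ≤ x ∧ (q - d).Prime}

/-- `pi3 x d d'` counts primes `q ≤ x` such that `q - d` and `q - d'` are both prime. -/
noncomputable def pi3 (x : ℝ) (d d' : ℕ) : ℕ :=
  Set.ncard {q : ℕ | q.Prime ∧ (q : ℝ) ≤ x ∧ (q - d).Prime ∧ (q - d').Prime}

/-- The twin prime constant `C₂ = ∏_{p > 2} (1 - 1/(p-1)²)`. -/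
noncomputable def C2 : ℝ := ∏' q : {q : ℕ // q.Prime ∧ 2 < q}, (1 - 1 / ((q : ℕ) - 1 : ℝ) ^ 2)

/-- The singular series `𝔖(d)`. -/
noncomputable def singularSeries (d : ℕ) : ℝ :=
  if Even d then
    2 * C2 * ∏ q ∈ d.primeFactors.filter (fun q => 2 < q), ((q : ℝ) - 1) / ((q : ℝ) - 2)
  else 0

/-- `nu d' d q` is the number of distinct residue classes mod `q` occupied by `{0, d', d}`. -/
def nu (d' d : ℕ) (q : ℕ) : ℕ :=
  ({(0 : ZMod q), (d' : ZMod q), (d : ZMod q)} : Finset (ZMod q)).card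

/-- The singular series of the triple `{0, d', d}`. -/
noncomputable def tripleSingularSeries (d' d : ℕ) : ℝ :=
  ∏' q : Nat.Primes, ((1 - 1 / ((q : ℕ) : ℝ)) ^ 3)⁻¹ * (1 - (nu d' d q : ℝ) / ((q : ℕ) : ℝ))

/-- The `k`-th primorial, the product of the first `k` primes. -/
noncomputable def primorialN (k : ℕ) : ℕ := ∏ i ∈ Finset.range k, Nat.nth Nat.Prime i

/-- The index `n` of the largest primorial `𝒫ₙ ≤ y`. -/
noncomputable def primorialFloorIndex (y : ℝ) : ℕ := sSup {n : ℕ | (primorialN n : ℝ) ≤ y}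

/-- Chebyshev's theta function `ϑ(t) = ∑_{p ≤ t} log p`. -/
noncomputable def theta (t : ℝ) : ℝ :=
  ∑ q ∈ (Finset.range (⌊t⌋₊ + 1)).filter Nat.Prime, Real.log q


lemma card_modEq_bound (X m a : ℕ) (hm : 0 < m) :
    |(((Finset.range X).filter (fun n => n ≡ a [MOD m])).card : ℝ) - X / m| ≤ 1 := by
  have h := Nat.count_modEq_card X hm a
  rw [Nat.count_eq_card_filter_range] at h
  rw [h]
  have h1 : (X : ℝ) = m * (X / m : ℕ) + (X % m : ℕ) := by
    exact_mod_cast (Nat.div_add_mod X m).symm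
  have hm' : (0 : ℝ) < m := by exact_mod_cast hm
  have h2 : ((X % m : ℕ) : ℝ) < m := by exact_mod_cast Nat.mod_lt X hm
  have h3 : (X : ℝ) / m = (X / m : ℕ) + ((X % m : ℕ) : ℝ) / m := by
    rw [h1]; field_simp
  have h4 : ((X % m : ℕ) : ℝ) / m < 1 := by rw [div_lt_one hm']; exact h2
  have h5 : 0 ≤ ((X % m : ℕ) : ℝ) / m := by positivity
  rw [h3, abs_le]
  push_cast
  split_ifs <;> constructor <;> push_cast <;> linarith

lemma card_multi_bound (C : Finset ℕ) (X : ℕ) (S : Finset ℕ) :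
    (∀ p ∈ S, p.Prime ∧ ∀ c ∈ C, c < p) → ∀ m a : ℕ, 0 < m → (∀ p ∈ S, Nat.Coprime m p) →
    |(((Finset.range X).filter (fun n => n ≡ a [MOD m] ∧ ∀ p ∈ S, ∃ c ∈ C, n ≡ c [MOD p])).card : ℝ)
      - X / m * ∏ p ∈ S, (C.card : ℝ) / p| ≤ (C.card : ℝ) ^ S.card := by
  classical
  induction S using Finset.induction_on with
  | empty =>
    intro _ m a hm _
    simpa using card_modEq_bound X m a hm
  | insert p S hp ih =>
    intro hS m a hm hco
    have hpp := (hS p (by simp)).1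
    have hmp : Nat.Coprime m p := hco p (by simp)
    have key : ∀ c : ℕ, ∃ b : ℕ, ∀ n, n ≡ b [MOD m * p] ↔ (n ≡ a [MOD m] ∧ n ≡ c [MOD p]) := by
      intro c
      obtain ⟨b, hb1, hb2⟩ := Nat.chineseRemainder hmp a c
      refine ⟨b, fun n => ?_⟩
      rw [← Nat.modEq_and_modEq_iff_modEq_mul hmp]
      exact ⟨fun h => ⟨h.1.trans hb1, h.2.trans hb2⟩, fun h => ⟨h.1.trans hb1.symm, h.2.trans hb2.symm⟩⟩
    choose b hb using key
    have hsplit : (Finset.range X).filter (fun n => n ≡ a [MOD m] ∧ ∀ q ∈ insert p S, ∃ c ∈ C, n ≡ c [MOD q])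
        = C.biUnion (fun c => (Finset.range X).filter (fun n => n ≡ b c [MOD m * p] ∧ ∀ q ∈ S, ∃ c ∈ C, n ≡ c [MOD q])) := by
      ext n
      simp only [Finset.mem_filter, Finset.mem_biUnion, Finset.forall_mem_insert, hb]
      grind
    rw [hsplit, Finset.card_biUnion]
    · have hI := fun c => ih (fun q hq => hS q (by simp [hq])) (m * p) (b c) (Nat.mul_pos hm hpp.pos)
        (fun q hq => Nat.Coprime.mul_left (hco q (by simp [hq]))
          ((Nat.coprime_primes hpp (hS q (by simp [hq])).1).2 (fun h => hp (h ▸ hq))))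
      rw [Finset.prod_insert hp, Finset.card_insert_of_notMem hp]
      have e : (X : ℝ) / m * ((C.card : ℝ) / p * ∏ q ∈ S, (C.card : ℝ) / q)
          = ∑ c ∈ C, (X : ℝ) / ((m * p : ℕ) : ℝ) * ∏ q ∈ S, (C.card : ℝ) / q := by
        rw [Finset.sum_const, nsmul_eq_mul]; push_cast
        have : (p : ℝ) ≠ 0 := by exact_mod_cast hpp.ne_zero
        have : (m : ℝ) ≠ 0 := by exact_mod_cast hm.ne'
        field_simp
      rw [e]
      push_cast only [Nat.cast_sum]
      rw [← Finset.sum_sub_distrib]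
      refine (Finset.abs_sum_le_sum_abs _ _).trans ((Finset.sum_le_sum (fun c _ => hI c)).trans ?_)
      rw [Finset.sum_const, nsmul_eq_mul, pow_succ, mul_comm]
    · intro c hc c' hc' hne
      rw [Function.onFun, Finset.disjoint_left]
      intro n hn hn'
      simp only [Finset.mem_filter, hb] at hn hn'
      have h1 := hn.2.1.2.symm.trans hn'.2.1.2
      have := Nat.ModEq.eq_of_lt_of_lt h1 ((hS p (by simp)).2 c hc) ((hS p (by simp)).2 c' hc')
      exact hne this

lemma bonferroni (W : Finset ℕ) (k : ℕ) (hk : Even k) :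
    (if W = ∅ then (1 : ℝ) else 0) ≤ ∑ S ∈ W.powerset with S.card ≤ k, (-1 : ℝ) ^ S.card := by
  rw [Finset.sum_filter]
  rw [Finset.sum_powerset_apply_card (f := fun j => if j ≤ k then (-1 : ℝ) ^ j else 0)]
  rcases Finset.eq_empty_or_nonempty W with rfl | hW
  · simp
  · rw [if_neg hW.ne_empty]
    obtain ⟨w, hw⟩ : ∃ w, W.card = w + 1 := ⟨W.card - 1, by have := hW.card_pos; omega⟩
    have h1 := @Int.alternating_sum_range_choose_eq_choose w k
    have h2 : ∑ m ∈ Finset.range (W.card + 1), W.card.choose m • (if m ≤ k then (-1 : ℝ) ^ m else 0)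
        = ∑ m ∈ Finset.range (k + 1), (-1 : ℝ) ^ m * (w + 1).choose m := by
      rw [hw]
      have : ∑ m ∈ Finset.range (k + 1), (-1 : ℝ) ^ m * (w + 1).choose m =
          ∑ m ∈ Finset.range (k + 1 + (w + 2)), (w + 1).choose m • (if m ≤ k then (-1 : ℝ) ^ m else 0) := by
        apply Finset.sum_subset_zero_on_sdiff
        · intro m; simp; omega
        · intro m hm
          simp only [Finset.mem_sdiff, Finset.mem_range] at hm
          rw [if_neg (by omega)]; simp
        · intro m hm
          rw [if_pos (by simp at hm; omega)]; simp [mul_comm]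
      rw [this]
      apply Finset.sum_subset_zero_on_sdiff
      · intro m; simp; omega
      · intro m hm
        simp only [Finset.mem_sdiff, Finset.mem_range] at hm
        rw [Nat.choose_eq_zero_of_lt (by omega)]; simp
      · intro m hm; rfl
    rw [h2]
    have h3 : (∑ m ∈ Finset.range (k + 1), (-1 : ℝ) ^ m * (w + 1).choose m) = (-1) ^ k * w.choose k := by
      exact_mod_cast h1
    rw [h3, hk.neg_one_pow]
    positivity

lemma brun_sieve (C Q : Finset ℕ) (X k z : ℕ) (hk : Even k) (hz : 1 ≤ z) (hQz : Q.card ≤ z)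
    (hQ : ∀ p ∈ Q, p.Prime ∧ C.card ≤ p ∧ ∀ c ∈ C, c < p) (s : ℝ) (hs : s = ∑ p ∈ Q, 1 / (p : ℝ)) :
    (((Finset.range X).filter (fun n => ∀ p ∈ Q, ∀ c ∈ C, ¬ n ≡ c [MOD p])).card : ℝ) ≤
      X * (exp (-(C.card * s)) + exp (-k) * exp (exp 1 * (C.card * s))) + z ^ k * exp C.card := by
  classical
  set κ : ℝ := (C.card : ℝ) with hκ
  have hκ0 : 0 ≤ κ := by positivity
  -- step 1
  have h1 : (((Finset.range X).filter (fun n => ∀ p ∈ Q, ∀ c ∈ C, ¬ n ≡ c [MOD p])).card : ℝ) ≤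
      ∑ S ∈ Q.powerset with S.card ≤ k, (-1 : ℝ) ^ S.card *
        (((Finset.range X).filter (fun n => ∀ p ∈ S, ∃ c ∈ C, n ≡ c [MOD p])).card : ℝ) := by
    rw [Finset.card_filter]
    simp_rw [Finset.card_filter]
    push_cast
    simp_rw [Finset.mul_sum]
    rw [Finset.sum_comm]
    apply Finset.sum_le_sum
    intro n _
    have hb := bonferroni (Q.filter (fun p => ∃ c ∈ C, n ≡ c [MOD p])) k hk
    refine le_trans (le_of_eq ?_) (hb.trans (le_of_eq ?_))
    · congr 1
      simp only [Finset.filter_eq_empty_iff, not_exists, not_and]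
    · simp_rw [mul_ite, mul_one, mul_zero]
      rw [← Finset.sum_filter]
      apply Finset.sum_congr _ (fun _ _ => rfl)
      ext S
      simp only [Finset.mem_filter, Finset.mem_powerset, Finset.subset_iff]
      grind
  -- step 2
  have h2 : ∀ S ∈ Q.powerset.filter (fun S => S.card ≤ k), (-1 : ℝ) ^ S.card *
        (((Finset.range X).filter (fun n => ∀ p ∈ S, ∃ c ∈ C, n ≡ c [MOD p])).card : ℝ) ≤
        X * ∏ p ∈ S, (-(κ / p)) + κ ^ S.card := by
    intro S hS
    simp only [Finset.mem_filter, Finset.mem_powerset] at hS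
    have hb := card_multi_bound C X S (fun p hp => ⟨(hQ p (hS.1 hp)).1, (hQ p (hS.1 hp)).2.2⟩) 1 0 one_pos
      (fun p _ => Nat.coprime_one_left p)
    simp only [Nat.modEq_one, true_and, Nat.cast_one, div_one] at hb
    rw [Finset.prod_neg]
    rw [abs_le] at hb
    rcases neg_one_pow_eq_or ℝ S.card with h | h <;> rw [h] <;> linarith [hb.1, hb.2]
  have h3 := h1.trans (Finset.sum_le_sum h2)
  rw [Finset.sum_add_distrib, ← Finset.mul_sum] at h3
  refine h3.trans (add_le_add ?_ ?_)
  · apply mul_le_mul_of_nonneg_left _ (Nat.cast_nonneg X)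
    have e1 : ∑ S ∈ Q.powerset with S.card ≤ k, ∏ p ∈ S, (-(κ / (p : ℝ))) =
        ∏ p ∈ Q, (1 + -(κ / (p : ℝ))) - ∑ S ∈ Q.powerset with ¬ S.card ≤ k, ∏ p ∈ S, (-(κ / (p : ℝ))) := by
      rw [Finset.prod_one_add, ← Finset.sum_filter_add_sum_filter_not Q.powerset (fun S => S.card ≤ k)]
      ring
    rw [e1, sub_eq_add_neg]
    apply add_le_add
    · calc ∏ p ∈ Q, (1 + -(κ / (p : ℝ))) ≤ ∏ p ∈ Q, exp (-(κ / (p : ℝ))) := by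
            apply Finset.prod_le_prod
            · intro p hp
              have h := hQ p hp
              have hp0 : (0 : ℝ) < p := by exact_mod_cast h.1.pos
              have : κ / p ≤ 1 := by rw [div_le_one hp0, hκ]; exact_mod_cast h.2.1
              linarith
            · intro p hp
              linarith [add_one_le_exp (-(κ / (p : ℝ)))]
        _ = exp (-(κ * s)) := by
            rw [← exp_sum, hs, Finset.mul_sum, ← Finset.sum_neg_distrib]; simp [div_eq_mul_inv]
    · rw [← Finset.sum_neg_distrib]
      calc ∑ S ∈ Q.powerset with ¬ S.card ≤ k, -∏ p ∈ S, (-(κ / (p : ℝ))) 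
          ≤ ∑ S ∈ Q.powerset with ¬ S.card ≤ k, exp (-k) * ∏ p ∈ S, (exp 1 * (κ / (p : ℝ))) := by
            apply Finset.sum_le_sum
            intro S hS
            simp only [Finset.mem_filter, not_le] at hS
            rw [Finset.prod_mul_distrib, Finset.prod_const, ← exp_nat_mul, ← mul_assoc, ← exp_add]
            have hp : 0 ≤ ∏ p ∈ S, (κ / (p : ℝ)) := Finset.prod_nonneg (fun p _ => by positivity)
            have : 1 ≤ exp (-k + S.card * 1) := by
              apply one_le_exp
              have : (k : ℝ) ≤ S.card := by exact_mod_cast hS.2.le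
              linarith
            rw [Finset.prod_neg]
            rcases neg_one_pow_eq_or ℝ S.card with h | h <;> rw [h] <;> nlinarith
        _ ≤ ∑ S ∈ Q.powerset, exp (-k) * ∏ p ∈ S, (exp 1 * (κ / (p : ℝ))) := by
            apply Finset.sum_le_sum_of_subset_of_nonneg (Finset.filter_subset _ _)
            intro S _ _
            have hp : 0 ≤ ∏ p ∈ S, (exp 1 * (κ / (p : ℝ))) := Finset.prod_nonneg (fun p _ => by positivity)
            positivity
        _ = exp (-k) * ∏ p ∈ Q, (1 + exp 1 * (κ / (p : ℝ))) := by
            rw [← Finset.mul_sum, Finset.prod_one_add]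
        _ ≤ exp (-k) * ∏ p ∈ Q, exp (exp 1 * (κ / (p : ℝ))) := by
            gcongr with p hp
            linarith [add_one_le_exp (exp 1 * (κ / (p : ℝ)))]
        _ = exp (-k) * exp (exp 1 * (κ * s)) := by
            rw [← exp_sum, hs, Finset.mul_sum, Finset.mul_sum]; simp [div_eq_mul_inv]
  · have hz' : (1 : ℝ) ≤ z := by exact_mod_cast hz
    calc ∑ S ∈ Q.powerset with S.card ≤ k, κ ^ S.card 
        ≤ ∑ S ∈ Q.powerset with S.card ≤ k, (z : ℝ) ^ k * ∏ p ∈ S, (κ / z) := by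
          apply Finset.sum_le_sum
          intro S hS
          simp only [Finset.mem_filter] at hS
          rw [Finset.prod_const, div_pow, ← mul_div_assoc, le_div_iff₀ (by positivity), mul_comm]
          gcongr
          exact hS.2
      _ ≤ ∑ S ∈ Q.powerset, (z : ℝ) ^ k * ∏ p ∈ S, (κ / z) := by
            apply Finset.sum_le_sum_of_subset_of_nonneg (Finset.filter_subset _ _)
            intro S _ _
            rw [Finset.prod_const]
            positivity
      _ = (z : ℝ) ^ k * ∏ p ∈ Q, (1 + κ / z) := by
            rw [← Finset.mul_sum, Finset.prod_one_add]
      _ ≤ (z : ℝ) ^ k * ∏ p ∈ Q, exp (κ / z) := by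
            gcongr with p hp
            linarith [add_one_le_exp (κ / z)]
      _ ≤ (z : ℝ) ^ k * exp κ := by
            gcongr
            rw [Finset.prod_const, ← exp_nat_mul]
            apply exp_le_exp.2
            rw [← mul_div_assoc, div_le_iff₀ (by positivity), mul_comm]
            gcongr

lemma sum_sq_bound (n : ℕ) :
    ∑ i ∈ Finset.range n, 1 / ((i : ℝ) + 2) ^ 2 ≤ 2 / 3 - 1 / ((n : ℝ) + 3 / 2) := by
  induction n with
  | zero => norm_num
  | succ n ih =>
    rw [Finset.sum_range_succ]
    push_cast
    have : 1 / ((n : ℝ) + 2) ^ 2 ≤ 1 / ((n : ℝ) + 3 / 2) - 1 / ((n : ℝ) + 1 + 3 / 2) := by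
      have hn : (0 : ℝ) ≤ n := n.cast_nonneg
      rw [div_sub_div _ _ (by positivity) (by positivity), div_le_div_iff₀ (by positivity) (by positivity)]
      nlinarith
    linarith

lemma one_sub_sum_le {ι : Type*} (s : Finset ι) (f : ι → ℝ) (h0 : ∀ i ∈ s, 0 ≤ f i)
    (h1 : ∀ i ∈ s, f i ≤ 1) : 1 - ∑ i ∈ s, f i ≤ ∏ i ∈ s, (1 - f i) := by
  classical
  have key : 1 - ∑ i ∈ s, f i ≤ ∏ i ∈ s, (1 - f i) ∧ ∏ i ∈ s, (1 - f i) ≤ 1 := by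
    induction s using Finset.induction_on with
    | empty => simp
    | insert a s ha ih =>
      rw [Finset.sum_insert ha, Finset.prod_insert ha]
      obtain ⟨h2, h3⟩ := ih (fun i hi => h0 i (by simp [hi])) (fun i hi => h1 i (by simp [hi]))
      have ha0 := h0 a (by simp)
      have ha1 := h1 a (by simp)
      have hn : 0 ≤ ∏ i ∈ s, (1 - f i) := Finset.prod_nonneg (fun i hi => by
        linarith [h1 i (by simp [hi])])
      constructor <;> nlinarith
  exact key.1

lemma C2_pos : 0 < C2 := by
  unfold C2
  by_cases hm : Multipliable (fun q : {q : ℕ // q.Prime ∧ 2 < q} => (1 - 1 / ((q : ℕ) - 1 : ℝ) ^ 2))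
  · have : (1 / 3 : ℝ) ≤ ∏' q : {q : ℕ // q.Prime ∧ 2 < q}, (1 - 1 / ((q : ℕ) - 1 : ℝ) ^ 2) := by
      refine ge_of_tendsto' hm.hasProd (fun s => ?_)
      have hb : ∀ q : {q : ℕ // q.Prime ∧ 2 < q}, (3 : ℝ) ≤ (q : ℕ) := fun q => by exact_mod_cast q.2.2
      refine le_trans ?_ (one_sub_sum_le s _ (fun q _ => by positivity) (fun q _ => ?_))
      · have hinj : Set.InjOn (fun q : {q : ℕ // q.Prime ∧ 2 < q} => (q : ℕ) - 3) s := by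
          intro a _ b _ hab
          have := a.2.2
          have := b.2.2
          apply Subtype.ext
          simp only at hab
          omega
        have e : ∑ q ∈ s, 1 / (((q : ℕ) : ℝ) - 1) ^ 2 =
            ∑ i ∈ s.image (fun q : {q : ℕ // q.Prime ∧ 2 < q} => (q : ℕ) - 3), 1 / ((i : ℝ) + 2) ^ 2 := by
          rw [Finset.sum_image hinj]
          apply Finset.sum_congr rfl
          intro q _
          rw [Nat.cast_sub q.2.2]
          congr 2; push_cast; ring
        rw [e]
        obtain ⟨n, hn⟩ := (s.image (fun q : {q : ℕ // q.Prime ∧ 2 < q} => (q : ℕ) - 3)).exists_nat_subset_range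
        have h1 : ∑ i ∈ s.image (fun q : {q : ℕ // q.Prime ∧ 2 < q} => (q : ℕ) - 3), 1 / ((i : ℝ) + 2) ^ 2 ≤
            ∑ i ∈ Finset.range n, 1 / ((i : ℝ) + 2) ^ 2 :=
          Finset.sum_le_sum_of_subset_of_nonneg hn (fun i _ _ => by positivity)
        have h2 := sum_sq_bound n
        have h3 : 0 ≤ 1 / ((n : ℝ) + 3 / 2) := by positivity
        linarith
      · have := hb q
        rw [div_le_one (by nlinarith)]
        nlinarith
    linarith
  · rw [tprod_eq_one_of_not_multipliable hm]; exact one_pos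

lemma log_le_prod (n : ℕ) (hn : 1 ≤ n) : log n ≤ ∏ p ∈ n.primesBelow, (1 - (p : ℝ)⁻¹)⁻¹ := by
  let f : ℕ →* ℝ := ⟨⟨fun n => (n : ℝ)⁻¹, by simp⟩, fun a b => by push_cast; rw [mul_inv]⟩
  have hf : ∀ {p : ℕ}, p.Prime → ‖f p‖ < 1 := by
    intro p hp
    change ‖(p : ℝ)⁻¹‖ < 1
    rw [norm_inv, Real.norm_natCast]
    exact inv_lt_one_of_one_lt₀ (by exact_mod_cast hp.one_lt)
  obtain ⟨-, h2⟩ := EulerProduct.summable_and_hasSum_smoothNumbers_prod_primesBelow_geometric hf n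
  change HasSum (fun m : n.smoothNumbers => ((m : ℕ) : ℝ)⁻¹) (∏ p ∈ n.primesBelow, (1 - (p : ℝ)⁻¹)⁻¹) at h2
  obtain ⟨m, rfl⟩ : ∃ m, n = m + 1 := ⟨n - 1, by omega⟩
  have h3 := log_add_one_le_harmonic m
  refine h3.trans ?_
  rw [harmonic]
  push_cast
  let g : Fin m → (m + 1).smoothNumbers := fun i => ⟨i + 1, Nat.mem_smoothNumbers_of_lt (by omega) (by omega)⟩
  have hg : Function.Injective g := by
    intro a b hab
    have := congrArg Subtype.val hab
    simp only [g] at this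
    exact Fin.ext (by omega)
  have := sum_le_hasSum (Finset.univ.map ⟨g, hg⟩) (fun i _ => by positivity) h2
  rw [Finset.sum_map] at this
  rw [Finset.sum_range]
  simpa [g] using this

lemma sum_inv_lower (n : ℕ) (hn : 2 ≤ n) :
    log (log n) - 1 ≤ ∑ p ∈ n.primesBelow, 1 / (p : ℝ) := by
  have hlog : 0 < log n := log_pos (by exact_mod_cast hn)
  have h1 := log_le_prod n (by omega)
  have h2 : ∏ p ∈ n.primesBelow, (1 - (p : ℝ)⁻¹)⁻¹ ≤ ∏ p ∈ n.primesBelow, exp (1 / ((p : ℝ) - 1)) := by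
    apply Finset.prod_le_prod
    · intro p hp
      have : (2 : ℝ) ≤ p := by exact_mod_cast (Nat.prime_of_mem_primesBelow hp).two_le
      have : (p : ℝ)⁻¹ ≤ 1 := inv_le_one_of_one_le₀ (by linarith)
      exact inv_nonneg.2 (by linarith)
    · intro p hp
      have : (2 : ℝ) ≤ p := by exact_mod_cast (Nat.prime_of_mem_primesBelow hp).two_le
      refine le_trans (le_of_eq ?_) (add_one_le_exp _)
      have h1 : (p : ℝ) - 1 ≠ 0 := by linarith
      have h2 : (p : ℝ) ≠ 0 := by linarith
      field_simp
      ring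
  rw [← exp_sum] at h2
  have h3 : log (log n) ≤ ∑ p ∈ n.primesBelow, 1 / ((p : ℝ) - 1) := by
    rw [log_le_iff_le_exp hlog]; exact h1.trans h2
  have h4 : ∑ p ∈ n.primesBelow, 1 / ((p : ℝ) - 1) =
      ∑ p ∈ n.primesBelow, 1 / (p : ℝ) + ∑ p ∈ n.primesBelow, 1 / ((p : ℝ) * (p - 1)) := by
    rw [← Finset.sum_add_distrib]
    apply Finset.sum_congr rfl
    intro p hp
    have : (2 : ℝ) ≤ p := by exact_mod_cast (Nat.prime_of_mem_primesBelow hp).two_le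
    have h1 : (p : ℝ) - 1 ≠ 0 := by linarith
    have h2 : (p : ℝ) ≠ 0 := by linarith
    field_simp
    ring
  have h5 : ∑ p ∈ n.primesBelow, 1 / ((p : ℝ) * (p - 1)) ≤ 1 := by
    have ha : ∀ m : ℕ, 2 ≤ m → ∑ p ∈ Finset.Ico 2 m, 1 / ((p : ℝ) * (p - 1)) = 1 - 1 / ((m : ℝ) - 1) := by
      intro m hm
      induction m, hm using Nat.le_induction with
      | base => norm_num
      | succ m hm ih =>
        rw [Finset.sum_Ico_succ_top hm, ih]
        have : (2 : ℝ) ≤ m := by exact_mod_cast hm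
        have h1 : (m : ℝ) - 1 ≠ 0 := by linarith
        have h2 : (m : ℝ) ≠ 0 := by linarith
        push_cast
        rw [add_sub_cancel_right]
        field_simp
        ring
    have hb : ∑ p ∈ n.primesBelow, 1 / ((p : ℝ) * (p - 1)) ≤ ∑ p ∈ Finset.Ico 2 n, 1 / ((p : ℝ) * (p - 1)) := by
      apply Finset.sum_le_sum_of_subset_of_nonneg
      · intro p hp
        have := (Nat.prime_of_mem_primesBelow hp).two_le
        have := Nat.lt_of_mem_primesBelow hp
        simp; omega
      · intro p hp _
        have : (2 : ℝ) ≤ p := by exact_mod_cast (Finset.mem_Ico.1 hp).1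
        have : (0 : ℝ) ≤ p - 1 := by linarith
        positivity
    rw [ha n hn] at hb
    have : (2 : ℝ) ≤ n := by exact_mod_cast hn
    have : 0 ≤ 1 / ((n : ℝ) - 1) := by apply div_nonneg <;> linarith
    linarith
  linarith

lemma pi2_finite (x : ℝ) (P : ℕ → Prop) : {q : ℕ | q.Prime ∧ (q : ℝ) ≤ x ∧ P q}.Finite := by
  refine (Set.finite_Iic ⌊x⌋₊).subset ?_
  intro q hq
  exact Nat.le_floor hq.2.1

lemma nthPrime_prime (n : ℕ) : (nthPrime n).Prime := Nat.prime_nth_prime _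

lemma nthPrime_lt {m n : ℕ} (hm : 1 ≤ m) (h : m < n) : nthPrime m < nthPrime n :=
  Nat.nth_strictMono Nat.infinite_setOfPred_prime (by omega)

lemma nthPrime_injOn : Set.InjOn nthPrime {n | 1 ≤ n} := by
  intro a ha b hb hab
  have := Nat.nth_injective Nat.infinite_setOfPred_prime hab
  simp only [Set.mem_ofPred_eq] at ha hb
  omega

lemma N_le_pi2 (x : ℝ) (d : ℕ) (hd : 0 < d) : N x d ≤ pi2 x d := by
  unfold N pi2
  have hinj : Set.InjOn nthPrime
      {n : ℕ | 2 ≤ n ∧ (nthPrime n : ℝ) ≤ x ∧ nthPrime n - nthPrime (n - 1) = d} :=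
    nthPrime_injOn.mono (fun n hn => by simp only [Set.mem_ofPred_eq] at hn ⊢; omega)
  rw [← hinj.ncard_image]
  apply Set.ncard_le_ncard _ (pi2_finite x _)
  rintro q ⟨n, ⟨h2, hx, hd'⟩, rfl⟩
  refine ⟨nthPrime_prime n, hx, ?_⟩
  have : nthPrime n - d = nthPrime (n - 1) := by omega
  rw [this]; exact nthPrime_prime _

lemma pi2_le (x : ℝ) (D : ℕ) (hD : 0 < D) :
    pi2 x D ≤ N x D + ∑ d' ∈ Finset.Ioo 0 D, pi3 x d' D := by
  classical
  unfold N
  set A := {n : ℕ | 2 ≤ n ∧ (nthPrime n : ℝ) ≤ x ∧ nthPrime n - nthPrime (n - 1) = D} with hA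
  have hsub : {q : ℕ | q.Prime ∧ (q : ℝ) ≤ x ∧ (q - D).Prime} ⊆
      Set.image nthPrime A ∪ ⋃ d' ∈ Finset.Ioo 0 D, {q : ℕ | q.Prime ∧ (q : ℝ) ≤ x ∧ (q - d').Prime ∧ (q - D).Prime} := by
    rintro q ⟨hq, hqx, hqD⟩
    have hqd := hqD.pos
    set m := Nat.count Nat.Prime q with hm
    have hmq : Nat.nth Nat.Prime m = q := Nat.nth_count hq
    have hm1 : 1 ≤ m := by
      by_contra h
      have : m = 0 := by omega
      have h2 : Nat.nth Nat.Prime (Nat.count Nat.Prime (q - D)) = q - D := Nat.nth_count hqD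
      have h3 := (Nat.nth_lt_nth Nat.infinite_setOfPred_prime (k := Nat.count Nat.Prime (q - D)) (n := m)).1
        (by rw [h2, hmq]; omega)
      omega
    have hle : q - D ≤ Nat.nth Nat.Prime (m - 1) := by
      apply Nat.le_nth_of_lt_nth_succ _ hqD
      rw [Nat.sub_add_cancel hm1, hmq]; omega
    have hlt : Nat.nth Nat.Prime (m - 1) < q := by
      rw [← hmq]; exact Nat.nth_strictMono Nat.infinite_setOfPred_prime (by omega)
    rcases hle.eq_or_lt with h | h
    · left
      refine ⟨m + 1, ⟨by omega, ?_, ?_⟩, ?_⟩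
      · simpa [nthPrime, hmq] using hqx
      · simp only [nthPrime, Nat.add_sub_cancel, hmq]; omega
      · simp [nthPrime, hmq]
    · right
      simp only [Set.mem_iUnion]
      refine ⟨q - Nat.nth Nat.Prime (m - 1), ?_, hq, hqx, ?_, hqD⟩
      · simp only [Finset.mem_Ioo]; omega
      · rw [Nat.sub_sub_self hlt.le]; exact Nat.prime_nth_prime _
  have hAfin : A.Finite := by
    apply Set.Finite.of_finite_image _ (f := nthPrime)
    · exact nthPrime_injOn.mono (fun n hn => by simp only [hA, Set.mem_ofPred_eq] at hn ⊢; omega)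
    · apply (pi2_finite x (fun _ => True)).subset
      rintro q ⟨n, hn, rfl⟩
      exact ⟨nthPrime_prime n, hn.2.1, trivial⟩
  have h1 : pi2 x D ≤ _ := Set.ncard_le_ncard hsub
    ((hAfin.image _).union (Set.Finite.biUnion (Finset.finite_toSet _) (fun d' _ => pi2_finite x _)))
  refine h1.trans ((Set.ncard_union_le _ _).trans (add_le_add (Set.ncard_image_le hAfin) ?_))
  exact Finset.set_ncard_biUnion_le _ _

lemma pi2_odd (x : ℝ) (d : ℕ) (hd : ¬ Even d) : pi2 x d ≤ 1 := by
  unfold pi2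
  rw [← Set.ncard_singleton (d + 2)]
  apply Set.ncard_le_ncard _ (Set.finite_singleton _)
  rintro q ⟨hq, -, hqd⟩
  have hpos := hqd.pos
  rw [Nat.not_even_iff_odd] at hd
  have h2 := hqd.two_le
  have h0 := hd.pos
  have hqo : Odd q := hq.odd_of_ne_two (by omega)
  have he : Even (q - d) := Nat.Odd.sub_odd hqo hd
  have := (hqd.even_iff).1 he
  simp only [Set.mem_singleton_iff]; omega

lemma singular_pos (d : ℕ) (hC : 0 < C2) (hd : Even d) : 0 < singularSeries d := by
  unfold singularSeries
  rw [if_pos hd]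
  have : 0 < ∏ q ∈ d.primeFactors.filter (fun q => 2 < q), ((q : ℝ) - 1) / ((q : ℝ) - 2) := by
    apply Finset.prod_pos
    intro q hq
    have : (2 : ℝ) < q := by exact_mod_cast (Finset.mem_filter.1 hq).2
    apply div_pos <;> linarith
  positivity

lemma singular_mul (d p : ℕ) (hC : 0 < C2) (hd : Even d) (hd0 : 0 < d) (hp : p.Prime) (hp2 : 2 < p) (hdp : d < p) :
    singularSeries d < singularSeries (d * p) := by
  have hpos := singular_pos d hC hd
  have hnd : ¬ p ∣ d := fun h => by have := Nat.le_of_dvd hd0 h; omega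
  have hfac : (d * p).primeFactors.filter (fun q => 2 < q) = insert p (d.primeFactors.filter (fun q => 2 < q)) := by
    rw [Nat.primeFactors_mul hd0.ne' hp.ne_zero, hp.primeFactors]
    ext q; simp only [Finset.mem_filter, Finset.mem_union, Finset.mem_insert, Finset.mem_singleton]
    grind
  have e : singularSeries (d * p) = singularSeries d * (((p : ℝ) - 1) / ((p : ℝ) - 2)) := by
    unfold singularSeries
    rw [if_pos hd, if_pos (hd.mul_right p), hfac, Finset.prod_insert (by simp [hnd])]
    ring
  rw [e]
  have h2 : (2 : ℝ) < p := by exact_mod_cast hp2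
  have : 1 < ((p : ℝ) - 1) / ((p : ℝ) - 2) := by rw [one_lt_div (by linarith)]; linarith
  nlinarith


lemma pi3_le (x : ℝ) (d' D z : ℕ) (h0 : 0 < d') (h1 : d' < D) (Q C : Finset ℕ) (hC : C = {0, d', D}) 
    (hQ : ∀ p ∈ Q, p.Prime ∧ p ≤ z) :
    (pi3 x d' D : ℝ) ≤ (z + D + 1) + (((Finset.range (⌊x⌋₊ + 1)).filter
      (fun n => ∀ p ∈ Q, ∀ c ∈ C, ¬ n ≡ c [MOD p])).card : ℝ) := by
  classical
  set F := (Finset.range (⌊x⌋₊ + 1)).filter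
      (fun n => ∀ p ∈ Q, ∀ c ∈ C, ¬ n ≡ c [MOD p])
  have hsub : {q : ℕ | q.Prime ∧ (q : ℝ) ≤ x ∧ (q - d').Prime ∧ (q - D).Prime} ⊆
      ((Finset.range (z + D + 1) ∪ F : Finset ℕ) : Set ℕ) := by
    rintro q ⟨hq, hqx, hq1, hq2⟩
    have := hq2.pos
    simp only [Finset.coe_union, Set.mem_union, Finset.mem_coe, Finset.mem_range, F, Finset.mem_filter]
    by_cases hz : q < z + D + 1
    · exact Or.inl hz
    · right
      refine ⟨by have := Nat.le_floor hqx; omega, ?_⟩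
      intro p hp c hc hmod
      obtain ⟨hpp, hpz⟩ := hQ p hp
      have hcD : c ≤ D := by
        simp only [hC, Finset.mem_insert, Finset.mem_singleton] at hc; omega
      have hqc : (q - c).Prime := by
        simp only [hC, Finset.mem_insert, Finset.mem_singleton] at hc
        rcases hc with rfl | rfl | rfl <;> assumption
      have hdvd : p ∣ q - c := (Nat.modEq_iff_dvd' (by omega)).1 hmod.symm
      have := (Nat.prime_dvd_prime_iff_eq hpp hqc).1 hdvd
      omega
  have h2 := Set.ncard_le_ncard hsub (Finset.finite_toSet _)
  rw [Set.ncard_coe_finset] at h2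
  have h3 : pi3 x d' D ≤ (z + D + 1) + F.card := by
    refine h2.trans ((Finset.card_union_le _ _).trans ?_)
    rw [Finset.card_range]
  exact_mod_cast h3

lemma select_primes (D : ℕ) : ∃ C0 : ℝ, ∀ σ : ℝ, 0 < σ → ∃ z : ℕ, ∃ Q : Finset ℕ,
    1 ≤ z ∧ (z : ℝ) ≤ exp (exp (σ + C0)) + 1 ∧ Q.card ≤ z ∧ (∀ p ∈ Q, p.Prime ∧ p ≤ z ∧ D < p) ∧
    σ ≤ ∑ p ∈ Q, 1 / (p : ℝ) ∧ ∑ p ∈ Q, 1 / (p : ℝ) ≤ σ + 1 := by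
  classical
  set A : ℝ := ∑ p ∈ (D + 1).primesBelow, 1 / (p : ℝ) with hA
  have hA0 : 0 ≤ A := Finset.sum_nonneg (fun p _ => by positivity)
  refine ⟨A + 1, fun σ hσ => ?_⟩
  let Q : ℕ → Finset ℕ := fun n => n.primesBelow.filter (fun p => D < p)
  have hlow : ∀ n : ℕ, 2 ≤ n → log (log n) - 1 - A ≤ ∑ p ∈ Q n, 1 / (p : ℝ) := by
    intro n hn
    have h1 := sum_inv_lower n hn
    have h2 : ∑ p ∈ n.primesBelow, 1 / (p : ℝ) ≤ ∑ p ∈ Q n, 1 / (p : ℝ) + A := by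
      rw [← Finset.sum_filter_add_sum_filter_not n.primesBelow (fun p => D < p)]
      gcongr
      apply Finset.sum_le_sum_of_subset_of_nonneg
      · intro p hp
        simp only [Finset.mem_filter, not_lt] at hp
        exact Nat.mem_primesBelow.2 ⟨by omega, Nat.prime_of_mem_primesBelow hp.1⟩
      · intro p _ _; positivity
    linarith
  set E := exp (exp (σ + (A + 1))) with hE
  have hE2 : 2 ≤ E := by
    have h1 : 1 ≤ exp (σ + (A + 1)) := one_le_exp (by linarith)
    have h2 := add_one_le_exp (exp (σ + (A + 1)))
    linarith
  have hn2 : 2 ≤ ⌈E⌉₊ := by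
    have : (2 : ℝ) ≤ ⌈E⌉₊ := hE2.trans (Nat.le_ceil E)
    exact_mod_cast this
  have hex : ∃ n : ℕ, σ ≤ ∑ p ∈ Q n, 1 / (p : ℝ) := by
    refine ⟨⌈E⌉₊, ?_⟩
    refine le_trans ?_ (hlow _ hn2)
    have h1 : log E ≤ log (⌈E⌉₊ : ℝ) := log_le_log (by linarith) (Nat.le_ceil E)
    rw [hE, log_exp, ← hE] at h1
    have h2 := log_le_log (exp_pos _) h1
    rw [log_exp] at h2
    linarith
  have hz := Nat.find_spec hex
  set z := Nat.find hex with hzdef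
  have hz1 : 1 ≤ z := by
    by_contra h
    have h0 : z = 0 := by omega
    rw [h0] at hz
    simp [Q] at hz
    linarith
  have hzE : z ≤ ⌈E⌉₊ := by
    apply Nat.find_min' hex
    refine le_trans ?_ (hlow _ hn2)
    have h1 : log E ≤ log (⌈E⌉₊ : ℝ) := log_le_log (by linarith) (Nat.le_ceil E)
    rw [hE, log_exp, ← hE] at h1
    have h2 := log_le_log (exp_pos _) h1
    rw [log_exp] at h2
    linarith
  refine ⟨z, Q z, hz1, ?_, ?_, ?_, hz, ?_⟩
  · have h1 : (z : ℝ) ≤ ⌈E⌉₊ := by exact_mod_cast hzE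
    have h2 := Nat.ceil_lt_add_one (show 0 ≤ E by linarith)
    linarith
  · have : Q z ⊆ Finset.range z := by
      intro p hp
      exact Finset.mem_range.2 (Nat.lt_of_mem_primesBelow (Finset.mem_filter.1 hp).1)
    simpa using Finset.card_le_card this
  · intro p hp
    have hp' := Finset.mem_filter.1 hp
    exact ⟨Nat.prime_of_mem_primesBelow hp'.1, (Nat.lt_of_mem_primesBelow hp'.1).le, hp'.2⟩
  · have hmin : ∑ p ∈ Q (z - 1), 1 / (p : ℝ) < σ := by
      have := Nat.find_min hex (m := z - 1) (by omega)
      exact not_le.1 this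
    have hsub : Q z ⊆ insert (z - 1) (Q (z - 1)) := by
      intro p hp
      have hp' := Finset.mem_filter.1 hp
      have h1 := Nat.lt_of_mem_primesBelow hp'.1
      by_cases h : p = z - 1
      · simp [h]
      · apply Finset.mem_insert_of_mem
        exact Finset.mem_filter.2 ⟨Nat.mem_primesBelow.2 ⟨by omega, Nat.prime_of_mem_primesBelow hp'.1⟩, hp'.2⟩
    have h2 : ∑ p ∈ Q z, 1 / (p : ℝ) ≤ ∑ p ∈ insert (z - 1) (Q (z - 1)), 1 / (p : ℝ) :=
      Finset.sum_le_sum_of_subset_of_nonneg hsub (fun p _ _ => by positivity)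
    have hni : z - 1 ∉ Q (z - 1) := by
      intro h
      have := Nat.lt_of_mem_primesBelow (Finset.mem_filter.1 h).1
      omega
    rw [Finset.sum_insert hni] at h2
    have h3 : 1 / ((z - 1 : ℕ) : ℝ) ≤ 1 := by
      rcases Nat.eq_zero_or_pos (z - 1) with h | h
      · rw [h]; simp
      · rw [div_le_one (by exact_mod_cast h)]; exact_mod_cast h
    linarith

lemma analytic_bound (C0 K ε : ℝ) (hK : 0 < K) (hε : 0 < ε) : ∀ᶠ t : ℝ in atTop,
    K * exp ((exp (3 / 4 * t + C0) + 1) * (10 * t + 42)) + 4 * exp (exp t) * exp (-(9 / 4 * t)) ≤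
      ε * exp (exp t) / exp t ^ 2 := by
  have hδ : 0 < 1 / (2 * (exp C0 + 2)) := by positivity
  have h1 : ∀ᶠ t : ℝ in atTop, 10 * t + 42 ≤ 1 / (2 * (exp C0 + 2)) * exp (1 / 4 * t) := by
    have ha : (fun t : ℝ => t ^ 1) =o[atTop] fun t => exp (1 / 4 * t) :=
      isLittleO_pow_exp_pos_mul_atTop 1 (by norm_num)
    have hb := ha.bound (c := 1 / (2 * (exp C0 + 2)) / 20) (by positivity)
    filter_upwards [hb, eventually_ge_atTop 5] with t ht h5
    simp only [pow_one, Real.norm_eq_abs, abs_exp] at ht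
    rw [abs_of_nonneg (by linarith)] at ht
    linarith
  have h2 : Tendsto (fun t : ℝ => exp t / 2) atTop atTop :=
    tendsto_exp_atTop.atTop_div_const (by norm_num)
  have h3 := (tendsto_exp_atTop.comp h2).eventually_ge_atTop (2 * K / ε)
  have h4 : ∀ᶠ t : ℝ in atTop, 8 / ε ≤ exp (t / 4) :=
    (tendsto_exp_atTop.comp (tendsto_id.atTop_div_const (by norm_num : (0 : ℝ) < 4))).eventually_ge_atTop (8 / ε)
  filter_upwards [h1, h3, h4, eventually_ge_atTop 0] with t h1 h3 h4 h0
  simp only [Function.comp] at h3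
  have hG : (exp (3 / 4 * t + C0) + 1) * (10 * t + 42) + 2 * t ≤ exp t / 2 := by
    set δ := 1 / (2 * (exp C0 + 2)) with hδd
    have e1 : exp t = exp (3 / 4 * t) * exp (1 / 4 * t) := by rw [← exp_add]; congr 1; ring
    have e2 : 1 ≤ exp (3 / 4 * t) := one_le_exp (by linarith)
    have e3 : δ * (exp C0 + 2) = 1 / 2 := by rw [hδd]; field_simp
    have e4 : (exp (3 / 4 * t + C0) + 1) * (10 * t + 42) + 2 * t ≤ (exp (3 / 4 * t + C0) + 2) * (10 * t + 42) := by
      nlinarith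
    have e5 : exp (3 / 4 * t + C0) + 2 ≤ exp (3 / 4 * t) * (exp C0 + 2) := by
      rw [exp_add]; nlinarith
    calc _ ≤ _ := e4
      _ ≤ (exp (3 / 4 * t) * (exp C0 + 2)) * (δ * exp (1 / 4 * t)) := by gcongr
      _ = (δ * (exp C0 + 2)) * exp t := by rw [e1]; ring
      _ = exp t / 2 := by rw [e3]; ring
  have hR : ε * exp (exp t) / exp t ^ 2 = ε * exp (exp t - 2 * t) := by
    rw [← exp_nat_mul, mul_div_assoc, ← exp_sub]; norm_num
  have hA : K * exp ((exp (3 / 4 * t + C0) + 1) * (10 * t + 42)) ≤ ε / 2 * exp (exp t - 2 * t) := by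
    have : exp t - 2 * t ≥ exp t / 2 + (exp (3 / 4 * t + C0) + 1) * (10 * t + 42) := by linarith
    calc K * exp ((exp (3 / 4 * t + C0) + 1) * (10 * t + 42)) 
        ≤ (ε / 2 * exp (exp t / 2)) * exp ((exp (3 / 4 * t + C0) + 1) * (10 * t + 42)) := by
          gcongr
          rw [div_le_iff₀ hε] at h3
          linarith
      _ = ε / 2 * exp (exp t / 2 + (exp (3 / 4 * t + C0) + 1) * (10 * t + 42)) := by rw [exp_add (exp t / 2), mul_assoc]
      _ ≤ _ := by gcongr
  have hB : 4 * exp (exp t) * exp (-(9 / 4 * t)) ≤ ε / 2 * exp (exp t - 2 * t) := by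
    have : exp (exp t - 2 * t) = exp (exp t) * exp (-(9 / 4 * t)) * exp (t / 4) := by
      rw [← exp_add, ← exp_add]; congr 1; ring
    rw [this]
    rw [div_le_iff₀ hε] at h4
    have : 0 < exp (exp t) * exp (-(9 / 4 * t)) := by positivity
    nlinarith
  rw [hR]
  linarith

lemma pi3_small (d' D : ℕ) (h0 : 0 < d') (h1 : d' < D) (ε : ℝ) (hε : 0 < ε) :
    ∀ᶠ x : ℝ in atTop, (pi3 x d' D : ℝ) ≤ ε * x / (log x) ^ 2 := by
  obtain ⟨C0, hC0⟩ := select_primes D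
  have htend : Tendsto (fun x : ℝ => log (log x)) atTop atTop := tendsto_log_atTop.comp tendsto_log_atTop
  have hA := htend.eventually (analytic_bound C0 (exp 3 + 1 + (D + 1)) ε (by positivity) hε)
  filter_upwards [hA, htend.eventually_gt_atTop 0, eventually_gt_atTop 1,
    tendsto_log_atTop.eventually_gt_atTop 0] with x hA ht hx1 hL
  rw [exp_log hL, exp_log (by linarith)] at hA
  set t := log (log x) with htdef
  obtain ⟨z, Q, hz1, hzE, hQc, hQ, hs1, hs2⟩ := hC0 (3 / 4 * t) (by linarith)
  refine le_trans ?_ hA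
  set C : Finset ℕ := {0, d', D} with hC
  have hCc : C.card = 3 := by
    rw [hC, Finset.card_insert_of_notMem, Finset.card_insert_of_notMem] <;> simp <;> omega
  have hp3 := pi3_le x d' D z h0 h1 Q C hC (fun p hp => ⟨(hQ p hp).1, (hQ p hp).2.1⟩)
  set k := 2 * ⌈5 * t + 20⌉₊ with hk
  have hk1 : 10 * t + 40 ≤ k := by
    have := Nat.le_ceil (5 * t + 20)
    rw [hk]; push_cast; linarith
  have hk2 : (k : ℝ) ≤ 10 * t + 42 := by
    have := Nat.ceil_lt_add_one (show 0 ≤ 5 * t + 20 by linarith)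
    rw [hk]; push_cast; linarith
  have hb := brun_sieve C Q (⌊x⌋₊ + 1) k z (even_two_mul _) hz1 hQc (fun p hp => by
    obtain ⟨ha, hb, hc⟩ := hQ p hp
    refine ⟨ha, by omega, fun c hc' => ?_⟩
    simp only [hC, Finset.mem_insert, Finset.mem_singleton] at hc'
    omega) _ rfl
  set s := ∑ p ∈ Q, 1 / (p : ℝ) with hs
  rw [hCc] at hb
  have hX : ((⌊x⌋₊ + 1 : ℕ) : ℝ) ≤ 2 * x := by
    have := Nat.floor_le (show 0 ≤ x by linarith)
    push_cast; linarith
  have hm1 : exp (-((3 : ℕ) * s)) ≤ exp (-(9 / 4 * t)) := by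
    apply exp_le_exp.2; push_cast; linarith
  have hm2 : exp (-(k : ℝ)) * exp (exp 1 * ((3 : ℕ) * s)) ≤ exp (-(9 / 4 * t)) := by
    rw [← exp_add]
    apply exp_le_exp.2
    have he := exp_one_lt_d9
    have hs0 : 0 ≤ s := by linarith
    have : exp 1 * ((3 : ℕ) * s) ≤ 2.8 * (3 * s) := by
      push_cast
      apply mul_le_mul_of_nonneg_right <;> linarith
    linarith
  have hmain : ((⌊x⌋₊ + 1 : ℕ) : ℝ) * (exp (-((3 : ℕ) * s)) + exp (-(k : ℝ)) * exp (exp 1 * ((3 : ℕ) * s))) ≤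
      4 * x * exp (-(9 / 4 * t)) := by
    calc _ ≤ (2 * x) * (exp (-(9 / 4 * t)) + exp (-(9 / 4 * t))) := by gcongr
      _ = _ := by ring
  set G := (exp (3 / 4 * t + C0) + 1) * (10 * t + 42) with hG
  have hz1' : (1 : ℝ) ≤ z := by exact_mod_cast hz1
  have hzk : (z : ℝ) ^ k ≤ exp G := by
    have h1 : (z : ℝ) ≤ exp (exp (3 / 4 * t + C0) + 1) := by
      refine hzE.trans ?_
      rw [exp_add (exp (3 / 4 * t + C0)) 1]
      have h2 := add_one_le_exp (1 : ℝ)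
      have h3 : 1 ≤ exp (exp (3 / 4 * t + C0)) := one_le_exp (exp_pos _).le
      nlinarith
    calc (z : ℝ) ^ k ≤ exp (exp (3 / 4 * t + C0) + 1) ^ k := by gcongr
      _ = exp (k * (exp (3 / 4 * t + C0) + 1)) := by rw [← exp_nat_mul]
      _ ≤ exp G := by
        apply exp_le_exp.2
        rw [hG, mul_comm]
        gcongr
  have hzz : (z : ℝ) ≤ z ^ k := by
    apply le_self_pow₀ hz1'
    intro h
    rw [h] at hk1
    push_cast at hk1
    linarith
  have hG1 : 1 ≤ exp G := one_le_exp (by positivity)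
  have he3 : (z : ℝ) ^ k * exp ((3 : ℕ) : ℝ) ≤ exp 3 * exp G := by
    push_cast
    rw [mul_comm]
    gcongr
  have hD : ((D : ℝ) + 1) ≤ (D + 1) * exp G := by
    have : (0 : ℝ) ≤ (D : ℝ) + 1 := by positivity
    nlinarith
  have : (exp 3 + 1 + ((D : ℝ) + 1)) * exp G = exp 3 * exp G + exp G + (D + 1) * exp G := by ring
  rw [this]
  have hfin := hp3.trans (add_le_add le_rfl (hb.trans (add_le_add hmain he3)))
  have hzG := hzz.trans hzk
  refine hfin.trans ?_
  clear * - hzG hD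
  linarith

lemma N_lower
    (hHL : ∀ ε : ℝ, 0 < ε → ∃ x₀ : ℝ, ∀ x ≥ x₀, ∀ d : ℕ, Even d → 2 ≤ d →
      (d : ℝ) ≤ (Real.log x) ^ 2 →
      |(pi2 x d : ℝ) - singularSeries d * x / (Real.log x) ^ 2| ≤
        ε * singularSeries d * x / (Real.log x) ^ 2) (D : ℕ) (hD : Even D) (hD2 : 2 ≤ D) (ε : ℝ) (hε : 0 < ε) :
    ∀ᶠ x : ℝ in atTop, (1 - ε) * singularSeries D * (x / (log x) ^ 2) ≤ N x D ∧
      (pi2 x D : ℝ) ≤ (1 + ε) * singularSeries D * (x / (log x) ^ 2) := by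
  have hS := singular_pos D C2_pos hD
  obtain ⟨x₀, hx₀⟩ := hHL (ε / 2) (by linarith)
  have hlog : Tendsto (fun x : ℝ => (log x) ^ 2) atTop atTop :=
    (tendsto_pow_atTop two_ne_zero).comp tendsto_log_atTop
  have hall : ∀ᶠ x : ℝ in atTop, ∀ d' ∈ Finset.Ioo 0 D,
      (pi3 x d' D : ℝ) ≤ (ε / 2 * singularSeries D / D) * x / (log x) ^ 2 := by
    rw [Filter.eventually_all_finset]
    intro d' hd'
    rw [Finset.mem_Ioo] at hd'
    exact pi3_small d' D hd'.1 hd'.2 _ (by positivity)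
  filter_upwards [hall, eventually_ge_atTop x₀, hlog.eventually_ge_atTop (D : ℝ), eventually_gt_atTop 1]
    with x hall hx hDx hx1
  have h1 := abs_le.1 (hx₀ x hx D hD hD2 hDx)
  have hlx : 0 < log x := log_pos hx1
  set Y := x / (log x) ^ 2 with hY
  have hY0 : 0 < Y := by positivity
  have e1 : singularSeries D * x / (log x) ^ 2 = singularSeries D * Y := by rw [hY]; ring
  have e2 : ε / 2 * singularSeries D * x / (log x) ^ 2 = ε / 2 * singularSeries D * Y := by rw [hY]; ring
  rw [e1, e2] at h1
  have hSY : 0 < ε * (singularSeries D * Y) := by positivity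
  have hp : (pi2 x D : ℝ) ≤ N x D + ∑ d' ∈ Finset.Ioo 0 D, (pi3 x d' D : ℝ) := by
    exact_mod_cast pi2_le x D (by omega)
  have hsum : ∑ d' ∈ Finset.Ioo 0 D, (pi3 x d' D : ℝ) ≤ ε / 2 * singularSeries D * Y := by
    refine (Finset.sum_le_sum hall).trans ?_
    rw [Finset.sum_const, nsmul_eq_mul, Nat.card_Ioo]
    have hD0 : (0 : ℝ) < D := by exact_mod_cast (by omega : 0 < D)
    have hc : ((D - 0 - 1 : ℕ) : ℝ) ≤ D := by exact_mod_cast (by omega : D - 0 - 1 ≤ D)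
    calc ((D - 0 - 1 : ℕ) : ℝ) * (ε / 2 * singularSeries D / D * x / log x ^ 2) 
        ≤ D * (ε / 2 * singularSeries D / D * x / log x ^ 2) := by
          apply mul_le_mul_of_nonneg_right hc
          have : 0 < x := by linarith
          positivity
      _ = _ := by rw [hY]; field_simp
  constructor
  · linarith
  · linarith

lemma not_champion
    (hHL : ∀ ε : ℝ, 0 < ε → ∃ x₀ : ℝ, ∀ x ≥ x₀, ∀ d : ℕ, Even d → 2 ≤ d →
      (d : ℝ) ≤ (Real.log x) ^ 2 →
      |(pi2 x d : ℝ) - singularSeries d * x / (Real.log x) ^ 2| ≤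
        ε * singularSeries d * x / (Real.log x) ^ 2) (d : ℕ) :
    ∀ᶠ x : ℝ in atTop, ¬ JumpingChampion x d := by
  rcases Nat.eq_zero_or_pos d with rfl | hd0
  · exact Eventually.of_forall (fun x h => absurd h.1 (lt_irrefl 0))
  have hY : Tendsto (fun x : ℝ => x / (log x) ^ 2) atTop atTop := by
    have h := (tendsto_exp_div_pow_atTop 2).comp tendsto_log_atTop
    refine h.congr' ?_
    filter_upwards [eventually_gt_atTop 0] with x hx
    simp [Function.comp, exp_log hx]
  by_cases hd : Even d
  · obtain ⟨p, hp1, hp⟩ := Nat.exists_infinite_primes (d + 3)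
    have hS := singular_pos d C2_pos hd
    have hlt := singular_mul d p C2_pos hd hd0 hp (by omega) (by omega)
    have hd2 : 2 ≤ d := by obtain ⟨r, hr⟩ := hd; omega
    set a := singularSeries d
    set b := singularSeries (d * p)
    set ε := (b - a) / (2 * (a + b)) with hε
    have hε0 : 0 < ε := div_pos (by linarith) (by linarith)
    have hεe : ε * (a + b) = (b - a) / 2 := by
      have : a + b ≠ 0 := by linarith
      rw [hε]; field_simp
    filter_upwards [N_lower hHL d hd hd2 ε hε0, N_lower hHL (d * p) (hd.mul_right p) (by nlinarith [hp.pos]) ε hε0,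
      hY.eventually_gt_atTop 0] with x h1 h2 hY0 hch
    have h3 : (N x (d * p) : ℝ) ≤ N x d := by exact_mod_cast hch.2 (d * p)
    have h4 : (N x d : ℝ) ≤ pi2 x d := by exact_mod_cast N_le_pi2 x d hd0
    have h5 := (h2.1.trans h3).trans (h4.trans h1.2)
    have h6 := le_of_mul_le_mul_right h5 hY0
    linarith
  · have hS := singular_pos 2 C2_pos even_two
    filter_upwards [N_lower hHL 2 even_two le_rfl (1 / 2) (by norm_num),
      hY.eventually_gt_atTop (2 / singularSeries 2)] with x h1 hYx hch
    have h3 : N x 2 ≤ 1 := (hch.2 2).trans ((N_le_pi2 x d hd0).trans (pi2_odd x d hd))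
    have h4 : (N x 2 : ℝ) ≤ 1 := by exact_mod_cast h3
    rw [div_lt_iff₀ hS] at hYx
    linarith [h1.1]

/-- Assuming the Hardy–Littlewood prime pair conjecture uniformly for `2 ≤ d ≤ (log x)²`,
the jumping champions tend to infinity. -/
theorem jumping_champions_tend_to_infinity
    (hHL : ∀ ε : ℝ, 0 < ε → ∃ x₀ : ℝ, ∀ x ≥ x₀, ∀ d : ℕ, Even d → 2 ≤ d →
      (d : ℝ) ≤ (Real.log x) ^ 2 →
      |(pi2 x d : ℝ) - singularSeries d * x / (Real.log x) ^ 2| ≤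
        ε * singularSeries d * x / (Real.log x) ^ 2) :
    ∀ M : ℝ, 0 < M → ∃ X : ℝ, ∀ x ≥ X, ∀ d : ℕ, JumpingChampion x d → M < (d : ℝ) := by
  intro M hM
  have h : ∀ᶠ x : ℝ in atTop, ∀ d ∈ Finset.range (⌊M⌋₊ + 1), ¬ JumpingChampion x d := by
    rw [Filter.eventually_all_finset]
    intro d _
    exact not_champion hHL d
  obtain ⟨X, hX⟩ := eventually_atTop.1 h
  refine ⟨X, fun x hx d hch => ?_⟩
  by_contra hle
  have hd : d ≤ ⌊M⌋₊ := Nat.le_floor (not_lt.1 hle)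
  exact hX x hx d (Finset.mem_range.2 (by omega)) hch
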